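/- Let n ≥ 1 and 1 ≤ r ≤ n−1. Then for every σ ∈ W_{n,r} one has N_σ ≤ N_{n,r}, where N_{n,r} = min((r−1)·(n−r), r·(n−r−1)). -/

import Mathlib

namespace Pap

variable (n : ℕ)

/-- `σ` has no fixed points and exactly `r` indices with `σ(i) < i`. -/
def Wnr (r : ℕ) (σ : Equiv.Perm (Fin n)) : Prop :=
  (∀ i, σ i ≠ i) ∧ (Finset.univ.filter fun i : Fin n => σ i < i).card = r

/-- `a_σ = |{(i,j) : i < j < σ(j) < σ(i)}|`. -/
def aP (σ : Equiv.Perm (Fin n)) : ℕ :=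
  (Finset.univ.filter fun p : Fin n × Fin n =>
    p.1 < p.2 ∧ p.2 < σ p.2 ∧ σ p.2 < σ p.1).card

/-- `ã_σ = |{(i,j) : σ(j) < σ(i) < i < j}|`. -/
def atP (σ : Equiv.Perm (Fin n)) : ℕ :=
  (Finset.univ.filter fun p : Fin n × Fin n =>
    σ p.2 < σ p.1 ∧ σ p.1 < p.1 ∧ p.1 < p.2).card

/-- `b_σ = |{(i,j) : σ(i) < i < j < σ(j)}|`. -/
def bP (σ : Equiv.Perm (Fin n)) : ℕ :=
  (Finset.univ.filter fun p : Fin n × Fin n =>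
    σ p.1 < p.1 ∧ p.1 < p.2 ∧ p.2 < σ p.2).card

/-- `b̃_σ = |{(i,j) : i < σ(i) < σ(j) < j}|`. -/
def btP (σ : Equiv.Perm (Fin n)) : ℕ :=
  (Finset.univ.filter fun p : Fin n × Fin n =>
    p.1 < σ p.1 ∧ σ p.1 < σ p.2 ∧ σ p.2 < p.2).card

/-- `N_σ`. -/
def NP (σ : Equiv.Perm (Fin n)) : ℕ := aP n σ + atP n σ + bP n σ + btP n σ

/-- The translation part `λ(w)`. -/
def lamOf (w : Equiv.Perm (Fin n)) : Fin n → ℤ := fun i => if i < w⁻¹ i then 0 else 1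

end Pap

/-!
Draw an arc from `i` to `σ i` for every `i`. Let `d` and `e` be the numbers of backward and
forward arcs. Each of the `d * e` pairs formed by a backward arc and a forward arc is either
disjoint (the two arcs diverge or converge) or overlapping, so it suffices to show that there are
at least `#nestedExcedances + #nestedDeficiencies + max d e` overlapping pairs. Any cut of the
line is crossed equally often forwards and backwards. Cutting just after the start of a forward
arc, the forward arcs crossing the cut include that arc and all those nested above it; cutting
just before the end of a backward arc, the backward arcs crossing the cut include those nested
above it. The equally many crossings in the opposite direction overlap the chosen arc, and no
overlapping pair arises from both kinds of cut. This gives the bound with `e`; reversing the order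
of the line gives the one with `d`.
-/

open Finset OrderDual

lemma card_filter_exit_eq_card_filter_enter {α : Type*} [Fintype α] [DecidableEq α]
    (σ : Equiv.Perm α) (s : Finset α) : #{x | x ∈ s ∧ σ x ∉ s} = #{x | σ x ∈ s ∧ x ∉ s} := by
  have hcard : #s = #(s.map σ.symm.toEmbedding) := (card_map _).symm
  have hcomm := card_sdiff_comm hcard
  convert hcomm using 2 <;> ext x <;> simp

section LinearOrder

variable {α : Type*} [Fintype α] [LinearOrder α] (σ : Equiv.Perm α)

/-- The starting points of the forward arcs `i → σ i`. -/
def excedances : Finset α := {i | i < σ i}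

/-- The starting points of the backward arcs `i → σ i`. -/
def deficiencies : Finset α := {i | σ i < i}

/-- The pairs `(i, j)` of forward arcs such that the arc of `j` lies strictly below that of `i`. -/
def nestedExcedances : Finset (α × α) := {p | p.1 < p.2 ∧ p.2 < σ p.2 ∧ σ p.2 < σ p.1}

/-- The pairs `(i, j)` of backward arcs such that the arc of `i` lies strictly below that of `j`. -/
def nestedDeficiencies : Finset (α × α) := {p | σ p.2 < σ p.1 ∧ σ p.1 < p.1 ∧ p.1 < p.2}

/-- The pairs `(i, j)` such that the backward arc of `i` lies entirely to the left of the forward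
arc of `j`. -/
def divergentPairs : Finset (α × α) := {p | σ p.1 < p.1 ∧ p.1 < p.2 ∧ p.2 < σ p.2}

/-- The pairs `(i, j)` such that the forward arc of `i` lies entirely to the left of the backward
arc of `j`. -/
def convergentPairs : Finset (α × α) := {p | p.1 < σ p.1 ∧ σ p.1 < σ p.2 ∧ σ p.2 < p.2}

/-- The number of alignments of `σ`: pairs of arcs that are nested in the same direction, or
disjoint in opposite directions. On `Fin n` this is `Pap.NP`. -/
def alignmentNumber : ℕ :=
  #(nestedExcedances σ) + #(nestedDeficiencies σ) + #(divergentPairs σ) + #(convergentPairs σ)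

/-- The pairs `(i, j)` such that the backward arc of `i` and the forward arc of `j` overlap. The
inequalities can be strict because arcs sharing a start or an end have `i = j`. -/
def overlappingPairs : Finset (α × α) :=
  {p | σ p.1 < p.1 ∧ p.2 < σ p.2 ∧ p.2 < p.1 ∧ σ p.1 < σ p.2}

/-- The pairs `(i, j)` such that the backward arc of `i` crosses the cut just after the start `j` of
a forward arc. -/
def backwardOverStart : Finset (α × α) := {p | p.2 < σ p.2 ∧ σ p.1 ≤ p.2 ∧ p.2 < p.1}

/-- The pairs `(i, j)` such that the forward arc of `j` crosses the cut just before the end `σ i` of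
a backward arc. Placing this cut before `σ i`, and that of `backwardOverStart` after `j`, makes
the two sets disjoint. -/
def forwardOverEnd : Finset (α × α) := {p | σ p.1 < p.1 ∧ p.2 < σ p.1 ∧ σ p.1 ≤ σ p.2}

lemma card_excedances_le_card_sub_card_deficiencies :
    #(excedances σ) ≤ Fintype.card α - #(deficiencies σ) := by
  have hdisj : Disjoint (excedances σ) (deficiencies σ) :=
    disjoint_filter.2 fun _ _ h => h.asymm
  refine le_tsub_of_add_le_right ?_
  rw [← card_union_of_disjoint hdisj]
  exact card_le_univ _

lemma card_divergentPairs_add_card_convergentPairs_add_card_overlappingPairs :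
    #(divergentPairs σ) + #(convergentPairs σ) + #(overlappingPairs σ) =
      #(deficiencies σ) * #(excedances σ) := by
  have hswap : #(convergentPairs σ) =
      #{p : α × α | p.2 < σ p.2 ∧ σ p.2 < σ p.1 ∧ σ p.1 < p.1} :=
    card_equiv (Equiv.prodComm α α) (by simp [convergentPairs])
  rw [hswap, ← card_product, ← card_union_of_disjoint, ← card_union_of_disjoint]
  · congr 1
    ext ⟨i, j⟩
    have hinj : σ i = σ j → i = j := fun h => σ.injective h
    simp only [divergentPairs, overlappingPairs, deficiencies, excedances, mem_union, mem_product,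
      mem_filter_univ]
    grind
  · rw [disjoint_left]
    simp only [divergentPairs, overlappingPairs, mem_union, mem_filter_univ]
    grind
  · exact disjoint_filter.2 (by grind)

lemma card_nestedExcedances_add_card_excedances_le_card_backwardOverStart :
    #(nestedExcedances σ) + #(excedances σ) ≤ #(backwardOverStart σ) := by
  -- The second coordinate selects the cut, so a single permutation of `α × α` treats all cuts.
  let below : Finset (α × α) := {p | p.2 < σ p.2 ∧ p.1 ≤ p.2}
  let τ : Equiv.Perm (α × α) := σ.prodCongr (Equiv.refl α)
  have hdisj : Disjoint (nestedExcedances σ) (excedances σ).diag := by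
    rw [disjoint_left]
    simp only [nestedExcedances, mem_diag, mem_filter_univ]
    grind
  calc #(nestedExcedances σ) + #(excedances σ)
      = #(nestedExcedances σ ∪ (excedances σ).diag) := by
        rw [card_union_of_disjoint hdisj, diag_card]
    _ ≤ #{p | p ∈ below ∧ τ p ∉ below} := card_le_card fun ⟨i, j⟩ => by
        simp only [nestedExcedances, excedances, below, τ, mem_union, mem_diag, mem_filter_univ,
          Equiv.prodCongr_apply, Prod.map_apply, Equiv.refl_apply]
        grind
    _ = #{p | τ p ∈ below ∧ p ∉ below} := card_filter_exit_eq_card_filter_enter τ below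
    _ ≤ #(backwardOverStart σ) := card_le_card fun ⟨i, j⟩ => by
        simp only [backwardOverStart, below, τ, mem_filter_univ, Equiv.prodCongr_apply,
          Prod.map_apply, Equiv.refl_apply]
        grind

lemma card_nestedDeficiencies_le_card_forwardOverEnd :
    #(nestedDeficiencies σ) ≤ #(forwardOverEnd σ) := by
  let below : Finset (α × α) := {p | σ p.1 < p.1 ∧ p.2 < σ p.1}
  let τ : Equiv.Perm (α × α) := (Equiv.refl α).prodCongr σ
  calc #(nestedDeficiencies σ)
      ≤ #{p | τ p ∈ below ∧ p ∉ below} := card_le_card fun ⟨i, j⟩ => by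
        simp only [nestedDeficiencies, below, τ, mem_filter_univ, Equiv.prodCongr_apply,
          Prod.map_apply, Equiv.refl_apply]
        grind
    _ = #{p | p ∈ below ∧ τ p ∉ below} := (card_filter_exit_eq_card_filter_enter τ below).symm
    _ ≤ #(forwardOverEnd σ) := card_le_card fun ⟨i, j⟩ => by
        simp only [forwardOverEnd, below, τ, mem_filter_univ, Equiv.prodCongr_apply,
          Prod.map_apply, Equiv.refl_apply]
        grind

lemma card_backwardOverStart_add_card_forwardOverEnd_le_card_overlappingPairs :
    #(backwardOverStart σ) + #(forwardOverEnd σ) ≤ #(overlappingPairs σ) := by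
  have hdisj : Disjoint (backwardOverStart σ) (forwardOverEnd σ) := disjoint_filter.2 (by grind)
  rw [← card_union_of_disjoint hdisj]
  refine card_le_card fun ⟨i, j⟩ => ?_
  have hinj : σ i = σ j → i = j := fun h => σ.injective h
  simp only [backwardOverStart, forwardOverEnd, overlappingPairs, mem_union, mem_filter_univ]
  grind

lemma card_nested_add_card_excedances_le_card_overlappingPairs :
    #(nestedExcedances σ) + #(nestedDeficiencies σ) + #(excedances σ) ≤ #(overlappingPairs σ) := by
  linarith [card_nestedExcedances_add_card_excedances_le_card_backwardOverStart σ,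
    card_nestedDeficiencies_le_card_forwardOverEnd σ,
    card_backwardOverStart_add_card_forwardOverEnd_le_card_overlappingPairs σ]

lemma card_excedances_permCongr_toDual :
    #(excedances (toDual.permCongr σ)) = #(deficiencies σ) :=
  card_equiv ofDual fun i => by
    simp only [excedances, deficiencies, mem_filter_univ, Equiv.permCongr_apply, toDual_symm_eq,
      lt_toDual]

lemma card_nestedExcedances_permCongr_toDual :
    #(nestedExcedances (toDual.permCongr σ)) = #(nestedDeficiencies σ) :=
  card_equiv ((Equiv.prodComm _ _).trans (ofDual.prodCongr ofDual)) fun ⟨i, j⟩ => by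
    simp [nestedExcedances, nestedDeficiencies, lt_toDual, and_comm, and_assoc]

lemma card_nestedDeficiencies_permCongr_toDual :
    #(nestedDeficiencies (toDual.permCongr σ)) = #(nestedExcedances σ) :=
  card_equiv ((Equiv.prodComm _ _).trans (ofDual.prodCongr ofDual)) fun ⟨i, j⟩ => by
    simp [nestedExcedances, nestedDeficiencies, toDual_lt, and_comm, and_assoc]

lemma card_overlappingPairs_permCongr_toDual :
    #(overlappingPairs (toDual.permCongr σ)) = #(overlappingPairs σ) :=
  card_equiv ((Equiv.prodComm _ _).trans (ofDual.prodCongr ofDual)) fun ⟨i, j⟩ => by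
    simp [overlappingPairs, toDual_lt, lt_toDual, and_comm, and_left_comm, and_assoc]

lemma card_nested_add_card_deficiencies_le_card_overlappingPairs :
    #(nestedExcedances σ) + #(nestedDeficiencies σ) + #(deficiencies σ) ≤
      #(overlappingPairs σ) := by
  have hdual := card_nested_add_card_excedances_le_card_overlappingPairs (toDual.permCongr σ)
  rwa [card_nestedExcedances_permCongr_toDual, card_nestedDeficiencies_permCongr_toDual,
    card_excedances_permCongr_toDual, card_overlappingPairs_permCongr_toDual,
    add_comm #(nestedDeficiencies σ)] at hdual

theorem stmt15_general :
    alignmentNumber σ ≤ min ((#(deficiencies σ) - 1) * #(excedances σ))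
      (#(deficiencies σ) * (#(excedances σ) - 1)) := by
  have hpairs := card_divergentPairs_add_card_convergentPairs_add_card_overlappingPairs σ
  have hexc := card_nested_add_card_excedances_le_card_overlappingPairs σ
  have hdef := card_nested_add_card_deficiencies_le_card_overlappingPairs σ
  rw [Nat.sub_one_mul, Nat.mul_sub_one, ← hpairs, alignmentNumber]
  exact le_min (by omega) (by omega)

end LinearOrder

theorem stmt15 (n r : ℕ) (hn : 1 ≤ n) (hr1 : 1 ≤ r) (hr2 : r ≤ n - 1)
    (σ : Equiv.Perm (Fin n)) (hσ : Pap.Wnr n r σ) :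
    Pap.NP n σ ≤ min ((r - 1) * (n - r)) (r * (n - r - 1)) := by
  obtain ⟨-, rfl⟩ := hσ
  have hexc := Fintype.card_fin n ▸ card_excedances_le_card_sub_card_deficiencies σ
  exact (stmt15_general σ).trans (min_le_min (Nat.mul_le_mul_left _ hexc)
    (Nat.mul_le_mul_left _ (Nat.sub_le_sub_right hexc 1)))
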